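/- Let Ω and Ξ be measurable spaces, μ a probability measure on Ω, P* a probability measure on Ξ, X a nonempty set, θ ∈ [0,1], δ ∈ ℝ, and α₁, α₂ ≥ 0. For each ω ∈ Ω let P̂(ω) be a probability measure on Ξ and 𝒫(ω) a nonempty set of probability measures on Ξ, and let f : X × Ξ → ℝ be such that for every ω and x, f(x,·) is integrable with respect to P*, to P̂(ω), and to every P ∈ 𝒫(ω); assume moreover for each ω there is C(ω) with |∫ f(x,·) dP| ≤ C(ω) for all x ∈ X and all P ∈ {P*, P̂(ω)} ∪ 𝒫(ω). Define 𝒫'_θ(ω) := {(1−θ)·P̂(ω) + θ·Q : Q ∈ 𝒫(ω)}. If μ{ω : sup_{x∈X}(∫ f(x,·) dP* − ∫ f(x,·) dP̂(ω)) > δ} ≤ α₁ and μ{ω : sup_{x∈X}(∫ f(x,·) dP* − sup_{P∈𝒫(ω)} ∫ f(x,·) dP) > δ} ≤ α₂, then μ{ω : sup_{x∈X}(∫ f(x,·) dP* − sup_{P∈𝒫'_θ(ω)} ∫ f(x,·) dP) > δ} ≤ α₁ + α₂. -/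

import Mathlib

/-!
The expectation is affine in the measure, so the worst case over the mixtures is the same mixture
of the nominal expectation and the worst case over the original ambiguity set. The generalization
error is a supremum of affine functions of the model objective, hence convex, so the TRO error is
at most the convex combination of the SAA and DRO errors. It can exceed the convex combination of
two thresholds only if one of these errors exceeds its own threshold.
-/

open MeasureTheory

/-- The mixture `(1-θ)·P + θ·Q` of two measures. -/
noncomputable def mix {Ξ : Type*} [MeasurableSpace Ξ] (θ : ℝ) (P Q : Measure Ξ) : Measure Ξ :=
  ENNReal.ofReal (1 - θ) • P + ENNReal.ofReal θ • Q

section LatticeOrderedGroup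

variable {ι G : Type*} [AddCommGroup G]

lemma bddAbove_range_of_abs_le [Lattice G] {u : ι → G} {C : G} (hu : ∀ i, |u i| ≤ C) :
    BddAbove (Set.range u) :=
  ⟨C, Set.forall_mem_range.2 fun i => (le_abs_self (u i)).trans (hu i)⟩

lemma bddAbove_range_sub_of_abs_le [Lattice G] [IsOrderedAddMonoid G] {u v : ι → G} {C D : G}
    (hu : ∀ i, |u i| ≤ C) (hv : ∀ i, |v i| ≤ D) :
    BddAbove (Set.range fun i => u i - v i) := by
  simp only [sub_eq_add_neg]
  exact (bddAbove_range_of_abs_le hu).range_add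
    (bddAbove_range_of_abs_le fun i => (abs_neg (v i)).trans_le (hv i))

lemma abs_ciSup_le [ConditionallyCompleteLattice G] [IsOrderedAddMonoid G] [Nonempty ι]
    {u : ι → G} {C : G} (hu : ∀ i, |u i| ≤ C) : |⨆ i, u i| ≤ C := by
  obtain ⟨i⟩ := ‹Nonempty ι›
  have hle : u i ≤ ⨆ j, u j := le_ciSup (bddAbove_range_of_abs_le hu) i
  exact abs_le'.2 ⟨ciSup_le fun j => (le_abs_self (u j)).trans (hu j),
    (neg_le_neg hle).trans ((neg_le_abs (u i)).trans (hu i))⟩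

end LatticeOrderedGroup

lemma integral_mix {Ξ E : Type*} [MeasurableSpace Ξ] [NormedAddCommGroup E] [NormedSpace ℝ E]
    {θ : ℝ} (hθ : θ ∈ Set.Icc (0 : ℝ) 1) {P Q : Measure Ξ} {g : Ξ → E}
    (hP : Integrable g P) (hQ : Integrable g Q) :
    ∫ ξ, g ξ ∂(mix θ P Q) = (1 - θ) • ∫ ξ, g ξ ∂P + θ • ∫ ξ, g ξ ∂Q := by
  rw [mix, integral_add_measure (hP.smul_measure ENNReal.ofReal_ne_top)
      (hQ.smul_measure ENNReal.ofReal_ne_top),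
    integral_smul_measure, integral_smul_measure,
    ENNReal.toReal_ofReal (sub_nonneg.2 hθ.2), ENNReal.toReal_ofReal hθ.1]

lemma ciSup_integral_mix {Ξ ι : Type*} [MeasurableSpace Ξ] [Nonempty ι]
    {θ : ℝ} (hθ : θ ∈ Set.Icc (0 : ℝ) 1) {P : Measure Ξ} {Q : ι → Measure Ξ} {g : Ξ → ℝ}
    (hP : Integrable g P) (hQ : ∀ i, Integrable g (Q i))
    (hbdd : BddAbove (Set.range fun i => ∫ ξ, g ξ ∂(Q i))) :
    ⨆ i, ∫ ξ, g ξ ∂(mix θ P (Q i)) = (1 - θ) * ∫ ξ, g ξ ∂P + θ * ⨆ i, ∫ ξ, g ξ ∂(Q i) := by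
  have hbdd_mul : BddAbove (Set.range fun i => θ * ∫ ξ, g ξ ∂(Q i)) :=
    hbdd.range_comp_left (monotone_mul_left_of_nonneg hθ.1)
  simp only [integral_mix hθ hP (hQ _), smul_eq_mul]
  rw [Real.mul_iSup_of_nonneg hθ.1, add_ciSup hbdd_mul]

/-- The generalization error of a model that replaces the true objective `risk` by the objective
`model`: the largest amount, over all decisions, by which the model underestimates the risk.
It is meaningful only if `risk - model` is bounded above, the real supremum being `0` otherwise. -/
noncomputable def generalizationError {X : Type*} (risk model : X → ℝ) : ℝ :=
  ⨆ x, (risk x - model x)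

lemma generalizationError_mul_add_mul_le {X : Type*} [Nonempty X] {r u v : X → ℝ}
    (hu : BddAbove (Set.range fun x => r x - u x)) (hv : BddAbove (Set.range fun x => r x - v x))
    {a b : ℝ} (ha : 0 ≤ a) (hb : 0 ≤ b) (hab : a + b = 1) :
    generalizationError r (fun x => a * u x + b * v x) ≤
      a * generalizationError r u + b * generalizationError r v := by
  refine ciSup_le fun x => ?_
  calc r x - (a * u x + b * v x) = a * (r x - u x) + b * (r x - v x) := by
        linear_combination -r x * hab
    _ ≤ a * generalizationError r u + b * generalizationError r v := by
        gcongr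
        · exact le_ciSup hu x
        · exact le_ciSup hv x

lemma generalizationError_ciSup_integral_mix_le {Ξ X ι : Type*} [MeasurableSpace Ξ]
    [Nonempty X] [Nonempty ι] {θ : ℝ} (hθ : θ ∈ Set.Icc (0 : ℝ) 1) {r : X → ℝ} {f : X → Ξ → ℝ}
    {P : Measure Ξ} {Q : ι → Measure Ξ}
    (hP : ∀ x, Integrable (f x) P) (hQ : ∀ x i, Integrable (f x) (Q i))
    (hbddP : BddAbove (Set.range fun x => r x - ∫ ξ, f x ξ ∂P))
    (hbddQ : BddAbove (Set.range fun x => r x - ⨆ i, ∫ ξ, f x ξ ∂(Q i)))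
    (hbdd : ∀ x, BddAbove (Set.range fun i => ∫ ξ, f x ξ ∂(Q i))) :
    generalizationError r (fun x => ⨆ i, ∫ ξ, f x ξ ∂(mix θ P (Q i))) ≤
      (1 - θ) * generalizationError r (fun x => ∫ ξ, f x ξ ∂P) +
        θ * generalizationError r (fun x => ⨆ i, ∫ ξ, f x ξ ∂(Q i)) := by
  simp only [ciSup_integral_mix hθ (hP _) (hQ _) (hbdd _)]
  exact generalizationError_mul_add_mul_le hbddP hbddQ
    (sub_nonneg.2 hθ.2) hθ.1 (sub_add_cancel 1 θ)

lemma measure_lt_le_add_of_le_mul_add_mul {Ω : Type*} [MeasurableSpace Ω] (μ : Measure Ω)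
    {a b : ℝ} (ha : 0 ≤ a) (hb : 0 ≤ b) {Z U V : Ω → ℝ} (hZ : ∀ ω, Z ω ≤ a * U ω + b * V ω)
    (s t : ℝ) :
    μ {ω | a * s + b * t < Z ω} ≤ μ {ω | s < U ω} + μ {ω | t < V ω} := by
  refine (measure_mono fun ω hω => ?_).trans (measure_union_le _ _)
  by_contra hnot
  obtain ⟨hU, hV⟩ : U ω ≤ s ∧ V ω ≤ t := by simpa using hnot
  have hle : a * U ω + b * V ω ≤ a * s + b * t := by gcongr
  exact ((hZ ω).trans hle).not_gt hω

theorem tro_generalization_bound_general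
    {Ω Ξ X : Type*} [MeasurableSpace Ω] [MeasurableSpace Ξ] [Nonempty X]
    (μ : Measure Ω) (r : X → ℝ) (f : X → Ξ → ℝ)
    {θ : ℝ} (hθ : θ ∈ Set.Icc (0 : ℝ) 1) (δ₁ δ₂ : ℝ)
    {Phat : Ω → Measure Ξ} {𝒜 : Ω → Set (Measure Ξ)} (h𝒜ne : ∀ ω, (𝒜 ω).Nonempty)
    (hinthat : ∀ ω x, Integrable (f x) (Phat ω))
    (hint : ∀ ω x, ∀ P ∈ 𝒜 ω, Integrable (f x) P)
    (hbddSAA : ∀ ω, BddAbove (Set.range fun x => r x - ∫ ξ, f x ξ ∂(Phat ω)))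
    (hbddDRO : ∀ ω, BddAbove (Set.range fun x =>
      r x - ⨆ P : 𝒜 ω, ∫ ξ, f x ξ ∂(P : Measure Ξ)))
    (hbdd : ∀ ω x, BddAbove (Set.range fun P : 𝒜 ω => ∫ ξ, f x ξ ∂(P : Measure Ξ))) :
    μ {ω | (1 - θ) * δ₁ + θ * δ₂ < generalizationError r
        fun x => ⨆ P : 𝒜 ω, ∫ ξ, f x ξ ∂(mix θ (Phat ω) (P : Measure Ξ))} ≤
      μ {ω | δ₁ < generalizationError r fun x => ∫ ξ, f x ξ ∂(Phat ω)} +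
        μ {ω | δ₂ < generalizationError r
          fun x => ⨆ P : 𝒜 ω, ∫ ξ, f x ξ ∂(P : Measure Ξ)} := by
  refine measure_lt_le_add_of_le_mul_add_mul μ (sub_nonneg.2 hθ.2) hθ.1 (fun ω => ?_) δ₁ δ₂
  have : Nonempty (𝒜 ω) := (h𝒜ne ω).to_subtype
  exact generalizationError_ciSup_integral_mix_le hθ (hinthat ω) (fun x P => hint ω x P P.2)
    (hbddSAA ω) (hbddDRO ω) (hbdd ω)

/-- Generalization bound for the TRO model: the probability that the TRO generalization
error exceeds `δ` is at most the sum of the SAA and DRO generalization-error bounds. -/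
theorem tro_generalization_bound
    {Ω Ξ X : Type*} [MeasurableSpace Ω] [MeasurableSpace Ξ] [Nonempty X]
    (μ : Measure Ω) [IsProbabilityMeasure μ]
    (Pstar : Measure Ξ) [IsProbabilityMeasure Pstar]
    (θ : ℝ) (hθ : θ ∈ Set.Icc (0:ℝ) 1) (δ : ℝ)
    (α₁ α₂ : ℝ) (hα₁ : 0 ≤ α₁) (hα₂ : 0 ≤ α₂)
    (Phat : Ω → Measure Ξ) (hPhat : ∀ ω, IsProbabilityMeasure (Phat ω))
    (𝒜 : Ω → Set (Measure Ξ)) (h𝒜ne : ∀ ω, (𝒜 ω).Nonempty)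
    (h𝒜prob : ∀ ω, ∀ P ∈ 𝒜 ω, IsProbabilityMeasure P)
    (f : X → Ξ → ℝ)
    (hintstar : ∀ x, Integrable (f x) Pstar)
    (hinthat : ∀ ω x, Integrable (f x) (Phat ω))
    (hint : ∀ ω x, ∀ P ∈ 𝒜 ω, Integrable (f x) P)
    (C : Ω → ℝ)
    (hCstar : ∀ ω x, |∫ ξ, f x ξ ∂Pstar| ≤ C ω)
    (hChat : ∀ ω x, |∫ ξ, f x ξ ∂(Phat ω)| ≤ C ω)
    (hCamb : ∀ ω x, ∀ P ∈ 𝒜 ω, |∫ ξ, f x ξ ∂P| ≤ C ω)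
    (hSAA : μ {ω | δ < ⨆ x : X, ((∫ ξ, f x ξ ∂Pstar) - ∫ ξ, f x ξ ∂(Phat ω))} ≤
      ENNReal.ofReal α₁)
    (hDRO : μ {ω | δ < ⨆ x : X,
        ((∫ ξ, f x ξ ∂Pstar) - ⨆ P : 𝒜 ω, ∫ ξ, f x ξ ∂(P : Measure Ξ))} ≤
      ENNReal.ofReal α₂) :
    μ {ω | δ < ⨆ x : X,
        ((∫ ξ, f x ξ ∂Pstar) -
          ⨆ P : 𝒜 ω, ∫ ξ, f x ξ ∂(mix θ (Phat ω) (P : Measure Ξ)))} ≤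
      ENNReal.ofReal (α₁ + α₂) := by
  have habs : ∀ ω x, ∀ P : 𝒜 ω, |∫ ξ, f x ξ ∂(P : Measure Ξ)| ≤ C ω :=
    fun ω x P => hCamb ω x P P.2
  have habs_iSup : ∀ ω x, |⨆ P : 𝒜 ω, ∫ ξ, f x ξ ∂(P : Measure Ξ)| ≤ C ω := fun ω x =>
    have := (h𝒜ne ω).to_subtype
    abs_ciSup_le (habs ω x)
  have hbound := tro_generalization_bound_general μ (fun x => ∫ ξ, f x ξ ∂Pstar) f hθ δ δ
    h𝒜ne hinthat hint (fun ω => bddAbove_range_sub_of_abs_le (hCstar ω) (hChat ω))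
    (fun ω => bddAbove_range_sub_of_abs_le (hCstar ω) (habs_iSup ω))
    (fun ω x => bddAbove_range_of_abs_le (habs ω x))
  rw [← add_mul, sub_add_cancel, one_mul] at hbound
  rw [ENNReal.ofReal_add hα₁ hα₂]
  exact hbound.trans (add_le_add hSAA hDRO)
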